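/- Let m ≥ 1 and t ≥ 2 be fixed integers. Then there exists n₀ such that for all integers n ≥ n₀, the star-critical Ramsey number satisfies r₊(C_{2m+1}, K₁ + nK_t) = n·t + t, where C_{2m+1} is the cycle on 2m + 1 vertices. -/

import Mathlib

open SimpleGraph

/-- `containsCopy F G` : the graph `F` contains a copy of the graph `G` (as a subgraph). -/
def containsCopy {V W : Type*} (F : SimpleGraph V) (G : SimpleGraph W) : Prop :=
  ∃ f : G →g F, Function.Injective f

/-- `arrows N G H` : every red/blue coloring of the edges of `K_N` (given by the graph `R` of
red edges, whose complement is the graph of blue edges) contains a red copy of `G` or a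
blue copy of `H`. -/
def arrows {V W : Type*} (N : ℕ) (G : SimpleGraph V) (H : SimpleGraph W) : Prop :=
  ∀ R : SimpleGraph (Fin N), containsCopy R G ∨ containsCopy Rᶜ H

/-- The Ramsey number `R(G, H)`. -/
noncomputable def ramseyNumber {V W : Type*} (G : SimpleGraph V) (H : SimpleGraph W) : ℕ :=
  sInf { N : ℕ | 0 < N ∧ arrows N G H }

/-- The generalized fan `K₁ + nK_t` : the join of a single vertex (`none`) with `n` disjoint
copies of `K_t`. -/
def genFan (n t : ℕ) : SimpleGraph (Option (Fin n × Fin t)) :=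
  SimpleGraph.fromRel (fun a b =>
    a = none ∨ ∃ p q : Fin n × Fin t, a = some p ∧ b = some q ∧ p.1 = q.1)

/-- A graph `G` is edge-critical if it has an edge `e` with `χ(G - e) = χ(G) - 1`. -/
def EdgeCritical {V : Type*} (G : SimpleGraph V) : Prop :=
  ∃ u v : V, G.Adj u v ∧ (G.deleteEdges {s(u, v)}).chromaticNumber + 1 = G.chromaticNumber

/-- `K_m ⊔ K_{1,ℓ}` : the complete graph on the `m` vertices `some i`, together with one new
vertex `none` joined to exactly the `ℓ` vertices `some i` with `i < ℓ` (for `ℓ ≤ m`). -/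
def KstarK (m ℓ : ℕ) : SimpleGraph (Option (Fin m)) :=
  SimpleGraph.fromRel (fun a b =>
    ((∃ i : Fin m, a = some i) ∧ ∃ j : Fin m, b = some j) ∨
      (a = none ∧ ∃ j : Fin m, b = some j ∧ (j : ℕ) < ℓ))

/-- `starArrows m ℓ G H` : every red/blue coloring of the edges of `K_m ⊔ K_{1,ℓ}` (the red
edges forming a subgraph `R`, the blue edges the remaining edges) contains a red copy of `G`
or a blue copy of `H`. -/
def starArrows {V W : Type*} (m ℓ : ℕ) (G : SimpleGraph V) (H : SimpleGraph W) : Prop :=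
  ∀ R : SimpleGraph (Option (Fin m)), R ≤ KstarK m ℓ →
    containsCopy R G ∨ containsCopy (KstarK m ℓ \ R) H

/-- The star-critical Ramsey number `r₊(G, H)`. -/
noncomputable def starRamsey {V W : Type*} (G : SimpleGraph V) (H : SimpleGraph W) : ℕ :=
  sInf { ℓ : ℕ | starArrows (ramseyNumber G H - 1) ℓ G H }

/-- The chromatic number of `G` as a natural number. -/
noncomputable def chromNum {V : Type*} (G : SimpleGraph V) : ℕ := G.chromaticNumber.toNat

/-- `s(G)` : the minimum size of a color class over all proper `χ(G)`-colorings of `G`. -/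
noncomputable def minClassSize {V : Type*} (G : SimpleGraph V) : ℕ :=
  sInf { m : ℕ | ∃ C : G.Coloring (Fin (chromNum G)), ∃ i : Fin (chromNum G),
    m = {v | C v = i}.ncard }

/-- `τ(G)` : the minimum, over all proper `χ(G)`-colorings of `G` having a color class `U_j`
of size `s(G)`, over all vertices `v ∈ U_j` and all other color classes `U_i`, of the number
of neighbors of `v` in `U_i`. -/
noncomputable def tauNum {V : Type*} (G : SimpleGraph V) : ℕ :=
  sInf { m : ℕ | ∃ C : G.Coloring (Fin (chromNum G)), ∃ j : Fin (chromNum G),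
    {v | C v = j}.ncard = minClassSize G ∧
    ∃ v, C v = j ∧ ∃ i : Fin (chromNum G), i ≠ j ∧ m = {u | C u = i ∧ G.Adj v u}.ncard }

/-!
Write `h = nt`. For the lower bound, split the `2h + 1` vertices into two sets, of `h` and `h + 1`
vertices, the new vertex lying in the larger one, and colour the edges between the two sets red.
Red is bipartite, and a blue connected graph on `h + 1` vertices must fill the larger set. If the
new vertex has fewer than `h + t` neighbours, all `h` vertices of the smaller set among them, its
blue degree is less than `t`.

For the upper bound, suppose that red contains no `C_{2m+1}` and blue no `K₁ + nK_t`. Ramsey's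
theorem lets one pick disjoint blue `K_t`s greedily in a blue neighbourhood, so blue degrees in
`K_{2h}` are at most `h + O(1)`, and red degrees at least `h - O(1)`. If the two ends of a red edge
`xy` had a large red-independent set of common red neighbours, then any two vertices of this set
would in turn have many common red neighbours outside it, and an alternating path between the two
closes up through `xy` to a red `C_{2m+1}`. Hence red edges have boundedly many common red
neighbours, so red is triangle-free, and bipartite by the Andrásfai–Erdős–Sós theorem. Its two
classes are blue cliques, of exactly `h` vertices each. The new vertex sends fewer than `t` blue
edges to each class, hence red edges to both; a red edge to one class again leaves, by the
alternating path, only `O(1)` red edges to the other, so its total degree is less than `h + t`.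
-/

section Arrows

variable {U V W : Type*} {G : SimpleGraph V} {H : SimpleGraph W} {N k l : ℕ}

lemma containsCopy_iff_isContained {F : SimpleGraph U} : containsCopy F G ↔ G ⊑ F :=
  ⟨fun ⟨f, hf⟩ ↦ ⟨f.toCopy hf⟩, fun ⟨f⟩ ↦ ⟨f.toHom, f.injective⟩⟩

@[simp] lemma KstarK_adj_some_some {i j : Fin N} :
    (KstarK N l).Adj (some i) (some j) ↔ i ≠ j := by
  simp [KstarK]

@[simp] lemma KstarK_adj_none_some {i : Fin N} : (KstarK N l).Adj none (some i) ↔ i < l := by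
  simp [KstarK]

lemma comap_some_KstarK_sdiff (R : SimpleGraph (Option (Fin N))) :
    (KstarK N l \ R).comap some = (R.comap some)ᶜ := by
  ext i j
  simp

lemma arrows.mono {N' : ℕ} (h : arrows N G H) (hN : N ≤ N') : arrows N' G H := by
  intro R
  let e := Fin.castLEEmb hN
  have := h (R.comap e)
  simp only [containsCopy_iff_isContained] at this ⊢
  refine this.imp (·.trans (Embedding.comap e R).isContained)
    fun hH ↦ (hH.mono_right fun i j hij ↦ ?_).trans (Embedding.comap e Rᶜ).isContained
  exact ⟨e.injective.ne hij.1, hij.2⟩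

lemma arrows.starArrows (h : arrows N G H) : starArrows N l G H := by
  intro R _
  have := h (R.comap some)
  rw [← comap_some_KstarK_sdiff (l := l)] at this
  simp only [containsCopy_iff_isContained] at this ⊢
  exact this.imp (·.trans (Embedding.comap .some R).isContained)
    (·.trans (Embedding.comap .some _).isContained)

lemma starArrows.arrows_succ (h : starArrows N l G H) : arrows (N + 1) G H := by
  intro R
  let e := (finSuccEquiv N).symm
  have := h (R.comap e ⊓ KstarK N l) inf_le_right
  simp only [containsCopy_iff_isContained] at this ⊢
  refine this.imp (fun hG ↦ ?_) (fun hH ↦ ?_)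
  · exact (hG.mono_right inf_le_left).trans (Embedding.comap e.toEmbedding R).isContained
  · refine (hH.mono_right ?_).trans (Embedding.comap e.toEmbedding Rᶜ).isContained
    exact fun i j hij ↦ ⟨e.injective.ne hij.1.ne, fun hR ↦ hij.2 ⟨hR, hij.1⟩⟩

lemma ramseyNumber_eq_succ (h : arrows (N + 1) G H) (hN : ¬ arrows N G H) :
    ramseyNumber G H = N + 1 := by
  refine le_antisymm (Nat.sInf_le ⟨N.succ_pos, h⟩) (le_csInf ⟨_, N.succ_pos, h⟩ ?_)
  rintro N' ⟨-, hN'⟩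
  by_contra! hlt
  exact hN (hN'.mono (Nat.lt_succ_iff.1 hlt))

lemma starRamsey_eq (hk : 0 < k) (h : starArrows N k G H)
    (hlt : ∀ l < k, ¬ starArrows N l G H) : starRamsey G H = k := by
  have hR : ramseyNumber G H = N + 1 :=
    ramseyNumber_eq_succ h.arrows_succ fun hN ↦ hlt 0 hk hN.starArrows
  rw [starRamsey, hR, Nat.add_sub_cancel]
  refine le_antisymm (Nat.sInf_le h) (le_csInf ⟨k, h⟩ fun l hl ↦ ?_)
  by_contra! hlk
  exact hlt l hlk hl

end Arrows

section LowerBound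

open Finset

lemma apply_eq_of_reachable {V α : Type*} {G : SimpleGraph V} {f : V → α}
    (hf : ∀ u v, G.Adj u v → f u = f v) {u v : V} (h : G.Reachable u v) : f u = f v := by
  obtain ⟨p⟩ := h
  induction p with
  | nil => rfl
  | cons huv _ ih => exact (hf _ _ huv).trans ih

/-- The position of a vertex of `KstarK N l`, the added vertex `none` being put last. -/
def position {N : ℕ} (v : Option (Fin N)) : ℕ := v.elim N Fin.val

lemma position_le {N : ℕ} (v : Option (Fin N)) : position v ≤ N := by
  cases v <;> simp [position, Fin.is_le']

lemma eq_none_of_position_eq {N : ℕ} {v : Option (Fin N)} (h : position v = N) : v = none := by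
  cases v with
  | none => rfl
  | some i => exact absurd h i.is_lt.ne

lemma position_injective {N : ℕ} : Function.Injective (position (N := N)) := by
  rintro (_ | i) (_ | j) h
  · rfl
  · exact absurd h.symm j.is_lt.ne
  · exact absurd h i.is_lt.ne
  · exact congrArg some (Fin.ext h)

lemma position_lt_of_KstarK_adj_none {N l : ℕ} {v : Option (Fin N)}
    (h : (KstarK N l).Adj none v) : position v < l := by
  cases v with
  | none => exact absurd h (KstarK N l).irrefl
  | some i => exact KstarK_adj_none_some.1 h

/-- The colouring of `KstarK (2 * h) l` behind the lower bound: the red edges are those between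
the first `h` vertices and the others. -/
def crossingGraph (h l : ℕ) : SimpleGraph (Option (Fin (2 * h))) :=
  KstarK (2 * h) l ⊓ (⊤ : SimpleGraph Bool).comap fun v ↦ decide (h ≤ position v)

lemma colorable_two_of_isContained_crossingGraph {V : Type*} {G : SimpleGraph V} {h l : ℕ}
    (hG : G ⊑ crossingGraph h l) : G.Colorable 2 := by
  obtain ⟨f⟩ := hG
  exact Coloring.colorable (α := Bool)
    ⟨fun v ↦ decide (h ≤ position (f v)), fun hadj ↦ (f.toHom.map_adj hadj).2⟩

variable {W : Type*} [Fintype W] {H : SimpleGraph W} [DecidableRel H.Adj] {h l : ℕ}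

lemma degree_le_of_copy_of_eq_none (f : Copy H (KstarK (2 * h) l \ crossingGraph h l))
    (hside : ∀ w, h ≤ position (f w)) {w : W} (hw : f w = none) : H.degree w ≤ l - h := by
  rw [← card_neighborFinset_eq_degree, ← Nat.card_Ico]
  refine card_le_card_of_injOn (position ∘ f) (fun u hu ↦ ?_)
    (position_injective.comp f.injective).injOn
  have hadj := (f.toHom.map_adj ((mem_neighborFinset ..).1 hu)).1
  rw [Copy.coe_toHom, hw] at hadj
  exact mem_coe.2 (mem_Ico.2 ⟨hside u, position_lt_of_KstarK_adj_none hadj⟩)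

lemma exists_degree_le_of_isContained_sdiff_crossingGraph (hH : H.Preconnected)
    (hcard : Fintype.card W = h + 1) (hHc : H ⊑ KstarK (2 * h) l \ crossingGraph h l) :
    ∃ w, H.degree w ≤ l - h := by
  obtain ⟨f⟩ := hHc
  have hinj : Function.Injective (position ∘ f) := position_injective.comp f.injective
  have hconst (u v : W) : decide (h ≤ position (f u)) = decide (h ≤ position (f v)) := by
    refine apply_eq_of_reachable (f := fun w ↦ decide (h ≤ position (f w))) (fun a b hab ↦ ?_)
      (hH u v)
    have hblue := f.toHom.map_adj hab
    by_contra hne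
    exact hblue.2 ⟨hblue.1, hne⟩
  have hside (w : W) : h ≤ position (f w) := by
    by_contra hw
    have hlt (u : W) : position (f u) < h := by simpa [hw] using hconst u w
    have : #(univ : Finset W) ≤ #(range h) :=
      card_le_card_of_injOn _ (fun u _ ↦ by simpa using hlt u) hinj.injOn
    rw [card_univ, hcard, card_range] at this
    omega
  have himage : univ.image (position ∘ f) = Icc h (2 * h) := by
    refine eq_of_subset_of_card_le (image_subset_iff.2 fun u _ ↦ ?_) ?_
    · exact mem_Icc.2 ⟨hside u, position_le _⟩
    · rw [card_image_of_injective _ hinj, card_univ, hcard, Nat.card_Icc]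
      omega
  obtain ⟨w, -, hw⟩ := mem_image.1 (himage ▸ right_mem_Icc.2 (by omega : h ≤ 2 * h))
  exact ⟨w, degree_le_of_copy_of_eq_none f hside (eq_none_of_position_eq hw)⟩

lemma not_starArrows_of_lt_add_degree {V : Type*} {G : SimpleGraph V} (hG : ¬ G.Colorable 2)
    (hH : H.Preconnected) (hcard : Fintype.card W = h + 1) {δ : ℕ} (hδ0 : 0 < δ)
    (hδ : ∀ w, δ ≤ H.degree w) (hl : l < h + δ) : ¬ starArrows (2 * h) l G H := by
  intro harrows
  rcases harrows (crossingGraph h l) inf_le_left with hred | hblue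
  · exact hG (colorable_two_of_isContained_crossingGraph (containsCopy_iff_isContained.1 hred))
  · obtain ⟨w, hw⟩ := exists_degree_le_of_isContained_sdiff_crossingGraph hH hcard
      (containsCopy_iff_isContained.1 hblue)
    have := hδ w
    omega

end LowerBound

section GenFan

open Finset

variable {n t : ℕ}

@[simp] lemma genFan_adj_none_some (p : Fin n × Fin t) : (genFan n t).Adj none (some p) := by
  simp [genFan]

@[simp] lemma genFan_adj_some_some {p q : Fin n × Fin t} :
    (genFan n t).Adj (some p) (some q) ↔ p ≠ q ∧ p.1 = q.1 := by
  simp only [genFan, fromRel_adj]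
  grind

lemma genFan_preconnected : (genFan n t).Preconnected := by
  have hhub (v : Option (Fin n × Fin t)) : (genFan n t).Reachable none v := by
    cases v with
    | none => exact .rfl
    | some p => exact (genFan_adj_none_some p).reachable
  exact fun u v ↦ (hhub u).symm.trans (hhub v)

lemma card_genFan_vertices : Fintype.card (Option (Fin n × Fin t)) = n * t + 1 := by simp

lemma le_degree_genFan [DecidableRel (genFan n t).Adj] (hn : 0 < n)
    (v : Option (Fin n × Fin t)) : t ≤ (genFan n t).degree v := by
  classical
  let block (i : Fin n) : Finset (Option (Fin n × Fin t)) := insertNone ({i} ×ˢ univ)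
  have hcard (i : Fin n) : #(block i) = t + 1 := by simp [block]
  obtain ⟨i, hi⟩ : ∃ i, v ∈ block i := by
    cases v with
    | none => exact ⟨⟨0, hn⟩, by simp [block]⟩
    | some p => exact ⟨p.1, by simp [block]⟩
  have hclique : (genFan n t).IsClique (block i) := by
    rintro (_ | p) hp (_ | q) hq hpq
    · exact absurd rfl hpq
    · exact genFan_adj_none_some q
    · exact (genFan_adj_none_some p).symm
    · have hfst : ∀ r : Fin n × Fin t, some r ∈ (block i : Set _) → r.1 = i := by simp [block]
      exact genFan_adj_some_some.2
        ⟨fun h ↦ hpq (congrArg some h), (hfst p hp).trans (hfst q hq).symm⟩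
  have hsub : (block i).erase v ⊆ (genFan n t).neighborFinset v := fun u hu ↦
    (mem_neighborFinset ..).2 (hclique hi (mem_of_mem_erase hu) (ne_of_mem_erase hu).symm)
  simpa [card_erase_of_mem hi, hcard] using card_le_card hsub

lemma not_colorable_two_cycleGraph_odd {m : ℕ} (hm : 1 ≤ m) :
    ¬ (cycleGraph (2 * m + 1)).Colorable 2 := fun h ↦ by
  have := h.chromaticNumber_le
  rw [chromaticNumber_cycleGraph_of_odd _ (by omega) ⟨m, rfl⟩] at this
  norm_num at this

lemma genFan_isContained_of_pairwise_disjoint {V : Type*} {G : SimpleGraph V}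
    {l : List (Finset V)} (hl : l.Pairwise Disjoint) (hclique : ∀ K ∈ l, G.IsNClique t K) {v : V}
    (hv : ∀ K ∈ l, ∀ u ∈ K, G.Adj v u) : genFan l.length t ⊑ G := by
  have hdisj (i j : Fin l.length) (hij : i ≠ j) : Disjoint (l.get i) (l.get j) := by
    rcases hij.lt_or_gt with h | h
    · exact List.pairwise_iff_get.1 hl i j h
    · exact (List.pairwise_iff_get.1 hl j i h).symm
  let e (i : Fin l.length) : Fin t ≃ l.get i :=
    (Finset.equivFinOfCardEq (hclique _ (l.get_mem i)).card_eq).symm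
  let f : Option (Fin l.length × Fin t) → V := fun p ↦ p.elim v fun q ↦ e q.1 q.2
  have hne (p q : Fin l.length × Fin t) (hpq : p ≠ q) : f (some p) ≠ f (some q) := by
    obtain ⟨i, a⟩ := p
    obtain ⟨j, b⟩ := q
    rcases eq_or_ne i j with rfl | hij
    · exact fun h ↦ hpq (congrArg _ ((e i).injective (Subtype.ext h)))
    · exact disjoint_iff_ne.1 (hdisj i j hij) _ (e i a).2 _ (e j b).2
  have hhub (p : Fin l.length × Fin t) : G.Adj v (f (some p)) :=
    hv _ (l.get_mem p.1) _ (e p.1 p.2).2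
  refine ⟨⟨f, ?_⟩, ?_⟩
  · rintro (_ | p) (_ | q) hpq
    · exact absurd hpq (genFan _ t).irrefl
    · exact hhub q
    · exact (hhub p).symm
    · obtain ⟨hne', hfst⟩ := genFan_adj_some_some.1 hpq
      refine (hclique _ (l.get_mem p.1)).isClique (e p.1 p.2).2 ?_ (hne p q hne')
      rw [hfst]
      exact (e q.1 q.2).2
  · rintro (_ | p) (_ | q) hpq
    · rfl
    · exact absurd hpq (hhub q).ne
    · exact absurd hpq (hhub p).ne'
    · by_contra hne'
      exact hne p q (fun h ↦ hne' (congrArg some h)) hpq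

end GenFan

section Packing

open Finset

variable {V : Type*} {G : SimpleGraph V} {n s t : ℕ} {S : Finset V}

lemma exists_isNClique_or_isNIndepSet (s t : ℕ) {S : Finset V} (hS : (s + t).choose s ≤ #S) :
    (∃ K ⊆ S, G.IsNClique s K) ∨ ∃ K ⊆ S, G.IsNIndepSet t K := by
  classical
  induction s generalizing t S with
  | zero => exact .inl ⟨∅, empty_subset _, isNClique_empty.2 rfl⟩
  | succ s ihs =>
    induction t generalizing S with
    | zero => exact .inr ⟨∅, empty_subset _, by simp [isNIndepSet_iff]⟩
    | succ t iht =>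
      obtain ⟨v, hv⟩ : S.Nonempty := card_pos.1 (hS.trans_lt' (Nat.choose_pos (by omega)))
      have hsplit : #{u ∈ S.erase v | G.Adj v u} + #{u ∈ S.erase v | ¬ G.Adj v u} + 1 = #S := by
        rw [card_filter_add_card_filter_not, card_erase_add_one hv]
      have hpascal : (s + 1 + (t + 1)).choose (s + 1) =
          (s + (t + 1)).choose s + (s + 1 + t).choose (s + 1) := by
        rw [show s + 1 + (t + 1) = s + (t + 1) + 1 by omega, Nat.choose_succ_succ',
          show s + (t + 1) = s + 1 + t by omega]
      rcases le_or_gt ((s + (t + 1)).choose s) #{u ∈ S.erase v | G.Adj v u} with hnbr | hnbr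
      · obtain ⟨K, hKS, hK⟩ | ⟨K, hKS, hK⟩ := ihs (t + 1) hnbr
        · refine .inl ⟨insert v K, insert_subset hv (hKS.trans ?_), hK.insert fun u hu ↦ ?_⟩
          · exact (filter_subset _ _).trans (erase_subset _ _)
          · exact (mem_filter.1 (hKS hu)).2
        · exact .inr ⟨K, hKS.trans ((filter_subset _ _).trans (erase_subset _ _)), hK⟩
      · have hnon : (s + 1 + t).choose (s + 1) ≤ #{u ∈ S.erase v | ¬ G.Adj v u} := by omega
        obtain ⟨K, hKS, hK⟩ | ⟨K, hKS, hK⟩ := iht hnon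
        · exact .inl ⟨K, hKS.trans ((filter_subset _ _).trans (erase_subset _ _)), hK⟩
        · refine .inr ⟨insert v K, insert_subset hv (hKS.trans ?_), ?_⟩
          · exact (filter_subset _ _).trans (erase_subset _ _)
          · rw [← isNClique_compl] at hK ⊢
            refine hK.insert fun u hu ↦ ?_
            obtain ⟨huS, huv⟩ := mem_filter.1 (hKS hu)
            exact ⟨(ne_of_mem_erase huS).symm, huv⟩

lemma exists_pairwise_disjoint_isNClique {c : ℕ}
    (hG : ∀ S' ⊆ S, t + c ≤ #S' → ∃ K ⊆ S', G.IsNClique t K) (hS : n * t + c ≤ #S) :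
    ∃ l : List (Finset V), l.length = n ∧ l.Pairwise Disjoint ∧
      ∀ K ∈ l, K ⊆ S ∧ G.IsNClique t K := by
  classical
  induction n generalizing S with
  | zero => exact ⟨[], by simp⟩
  | succ n ih =>
    rw [Nat.succ_mul] at hS
    obtain ⟨K, hKS, hK⟩ := hG S Subset.rfl (by omega)
    have hrest : n * t + c ≤ #(S \ K) := by
      rw [card_sdiff_of_subset hKS, hK.card_eq]
      omega
    obtain ⟨l, hlen, hdisj, hl⟩ := ih (fun S' hS' ↦ hG S' (hS'.trans sdiff_subset)) hrest
    refine ⟨K :: l, by simp [hlen], List.pairwise_cons.2 ⟨fun L hL ↦ ?_, hdisj⟩, ?_⟩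
    · exact disjoint_of_subset_right (hl L hL).1 disjoint_sdiff
    · rintro L (_ | ⟨_, hL⟩)
      · exact ⟨hKS, hK⟩
      · exact (hl L hL).imp_left (·.trans sdiff_subset)

lemma card_le_degree_add_of_free_genFan_compl [Fintype V] [DecidableRel G.Adj]
    (hG : G.CliqueFree s) (hfan : (genFan n t).Free Gᶜ) (v : V) :
    Fintype.card V ≤ G.degree v + n * t + (s + t).choose s := by
  classical
  suffices Gᶜ.degree v < n * t + (s + t).choose s by
    rw [degree_compl] at this
    omega
  by_contra! hdeg
  have hclique (S : Finset V) (hS : t + (s + t).choose s ≤ #S) : ∃ K ⊆ S, Gᶜ.IsNClique t K := by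
    simp only [isNClique_compl]
    refine (exists_isNClique_or_isNIndepSet s t (by omega)).resolve_left ?_
    exact fun ⟨K, _, hK⟩ ↦ hG K hK
  obtain ⟨l, rfl, hdisj, hl⟩ := exists_pairwise_disjoint_isNClique
    (S := Gᶜ.neighborFinset v) (fun S' _ ↦ hclique S') (by rwa [card_neighborFinset_eq_degree])
  exact hfan <| genFan_isContained_of_pairwise_disjoint hdisj (fun K hK ↦ (hl K hK).2)
    fun K hK u hu ↦ (mem_neighborFinset ..).1 ((hl K hK).1 hu)

lemma genFan_isContained_of_isNClique {X : Finset V} (hX : G.IsNClique (n * t) X) (hn : 0 < n)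
    {v : V} (hv : v ∉ X) {Y : Finset V} (hYX : Y ⊆ X) (hY : #Y = t) (ht : 0 < t)
    (hadj : ∀ u ∈ Y, G.Adj v u) : genFan n t ⊑ G := by
  classical
  obtain ⟨n, rfl⟩ := Nat.exists_eq_add_one.2 hn
  obtain ⟨y, hy⟩ := card_pos.1 (hY ▸ ht)
  have hYerase : G.IsNClique (t - 1) (Y.erase y) := by
    exact ⟨hX.isClique.subset (by grind), by rw [card_erase_of_mem hy, hY]⟩
  have hblock : G.IsNClique t (insert v (Y.erase y)) := by
    convert hYerase.insert fun u hu ↦ hadj u (mem_of_mem_erase hu) using 1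
    omega
  have hrest : n * t + 0 ≤ #(X \ Y) := by
    rw [card_sdiff_of_subset hYX, hX.card_eq, hY, Nat.succ_mul]
    omega
  have hsub (S : Finset V) (hSX : S ⊆ X \ Y) (hS : t + 0 ≤ #S) : ∃ K ⊆ S, G.IsNClique t K := by
    obtain ⟨K, hKS, hK⟩ := exists_subset_card_eq hS
    exact ⟨K, hKS, hX.isClique.subset (by grind), hK⟩
  obtain ⟨l, rfl, hdisj, hl⟩ := exists_pairwise_disjoint_isNClique hsub hrest
  refine genFan_isContained_of_pairwise_disjoint (l := insert v (Y.erase y) :: l) (v := y)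
    (List.pairwise_cons.2 ⟨fun K hK ↦ ?_, hdisj⟩) ?_ ?_
  · have := (hl K hK).1
    grind [Finset.disjoint_left]
  · rintro K (_ | ⟨_, hK⟩)
    exacts [hblock, (hl K hK).2]
  · rintro K (_ | ⟨_, hK⟩) u hu
    · obtain rfl | hu := mem_insert.1 hu
      · exact (hadj y hy).symm
      · exact hX.isClique (hYX hy) (hYX (mem_of_mem_erase hu)) (ne_of_mem_erase hu).symm
    · have := (hl K hK).1 hu
      exact hX.isClique (hYX hy) (by grind) (by grind)

lemma card_inter_neighborFinset_lt_of_free_genFan [Fintype V] [DecidableEq V] [DecidableRel G.Adj]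
    (hG : (genFan n t).Free G) (hn : 0 < n) (ht : 0 < t) {X : Finset V}
    (hX : G.IsNClique (n * t) X) {v : V} (hv : v ∉ X) : #(X ∩ G.neighborFinset v) < t := by
  by_contra! hcard
  obtain ⟨Y, hYsub, hY⟩ := exists_subset_card_eq hcard
  exact hG (genFan_isContained_of_isNClique hX hn hv (hYsub.trans inter_subset_left) hY ht
    fun u hu ↦ (mem_neighborFinset ..).1 (mem_of_mem_inter_right (hYsub hu)))

end Packing

section OddCycle

open Finset

variable {V : Type*} {G : SimpleGraph V} {m : ℕ}

lemma exists_isPath_alternating [DecidableEq V] [DecidableRel G.Adj] {P T : Finset V}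
    (hPT : Disjoint P T) {k : ℕ} (hP : k + 1 ≤ #P)
    (hcommon : ∀ u ∈ P, ∀ w ∈ P, u ≠ w → k ≤ #{z ∈ T | G.Adj u z ∧ G.Adj w z}) {a : V}
    (ha : a ∈ P) :
    ∃ b ∈ P, ∃ p : G.Walk a b, p.IsPath ∧ p.length = 2 * k ∧ ∀ z ∈ p.support, z ∈ P ∪ T := by
  induction k generalizing P T a with
  | zero => exact ⟨a, ha, .nil, .nil, rfl, by simp [ha]⟩
  | succ k ih =>
    obtain ⟨a', ha'⟩ : (P.erase a).Nonempty := card_pos.1 (by rw [card_erase_of_mem ha]; omega)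
    have ha'P := mem_of_mem_erase ha'
    obtain ⟨z, hz⟩ := card_pos.1
      (k.succ_pos.trans_le (hcommon a ha a' ha'P (ne_of_mem_erase ha').symm))
    obtain ⟨hzT, haz, ha'z⟩ := mem_filter.1 hz
    have hcommon' (u : V) (hu : u ∈ P.erase a) (w : V) (hw : w ∈ P.erase a) (huw : u ≠ w) :
        k ≤ #{v ∈ T.erase z | G.Adj u v ∧ G.Adj w v} := by
      rw [filter_erase]
      exact (Nat.sub_le_sub_right
        (hcommon u (mem_of_mem_erase hu) w (mem_of_mem_erase hw) huw) 1).trans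
        pred_card_le_card_erase
    obtain ⟨b, hb, p, hp, hlen, hsupp⟩ := ih (hPT.mono (erase_subset _ _) (erase_subset _ _))
      (by rw [card_erase_of_mem ha]; omega) hcommon' ha'
    have hzP : z ∉ P := fun hzP ↦ disjoint_iff_ne.1 hPT z hzP z hzT rfl
    have haT : a ∉ T := fun haT ↦ disjoint_iff_ne.1 hPT a ha a haT rfl
    refine ⟨b, mem_of_mem_erase hb, .cons haz (.cons ha'z.symm p), ?_, ?_, ?_⟩
    · simp only [Walk.cons_isPath_iff, Walk.support_cons, List.mem_cons]
      grind [haz.ne]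
    · simp only [Walk.length_cons, hlen]
      omega
    · simp only [Walk.support_cons, List.mem_cons]
      grind

lemma cycleGraph_isContained_of_isPath {x y a b : V} (hxy : G.Adj x y) (hxa : G.Adj x a)
    (hyb : G.Adj y b) {p : G.Walk a b} (hp : p.IsPath) (hx : x ∉ p.support) (hy : y ∉ p.support) :
    cycleGraph (p.length + 3) ⊑ G := by
  refine (cycleGraph_isContained_iff (by omega)).2
    ⟨y, .cons hxy.symm (.cons hxa (p.concat hyb.symm)), ?_, by simp⟩
  rw [Walk.cons_isCycle_iff, Walk.cons_isPath_iff, Walk.concat_isPath_iff]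
  classical
  have hxp (z : V) : s(x, z) ∉ p.edges := fun h ↦ hx (p.fst_mem_support_of_mem_edges h)
  have := p.end_mem_support
  have := p.start_mem_support
  simp only [Walk.support_concat, Walk.edges_cons, Walk.edges_concat, List.concat_eq_append]
  grind [hxy.ne, Sym2.eq_swap]

variable [Fintype V] [DecidableEq V] [DecidableRel G.Adj] {I : Finset V}

lemma degree_add_degree_add_card_le (hI : G.IsIndepSet I) {u w : V} (hu : u ∈ I) (hw : w ∈ I) :
    G.degree u + G.degree w + #I ≤
      Fintype.card V + #(G.neighborFinset u ∩ G.neighborFinset w) := by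
  have hcompl {v : V} (hv : v ∈ I) : G.neighborFinset v ⊆ Iᶜ := fun z hz ↦ by
    rw [mem_neighborFinset] at hz
    exact mem_compl.2 fun hzI ↦ hI hv hzI hz.ne hz
  have hunion := card_le_card (union_subset (hcompl hu) (hcompl hw))
  have := card_union_add_card_inter (G.neighborFinset u) (G.neighborFinset w)
  have := card_compl_add_card I
  simp only [card_neighborFinset_eq_degree] at *
  omega

lemma cycleGraph_isContained_of_isIndepSet (hm : 1 ≤ m) {x y : V} (hxy : G.Adj x y)
    (hI : G.IsIndepSet I) (hIxy : I ⊆ G.neighborFinset x ∩ G.neighborFinset y) {c : ℕ}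
    (hdeg : ∀ w ∈ I, Fintype.card V ≤ 2 * (G.degree w + c)) (hcard : 2 * c + m + 1 ≤ #I) :
    cycleGraph (2 * m + 1) ⊑ G := by
  have hIadj (z : V) (hz : z ∈ I) : G.Adj x z ∧ G.Adj y z := by simpa using hIxy hz
  have hxyI : x ∉ I ∧ y ∉ I := ⟨fun h ↦ (hIadj x h).1.ne rfl, fun h ↦ (hIadj y h).2.ne rfl⟩
  have hcommon (u : V) (hu : u ∈ I) (w : V) (hw : w ∈ I) :
      m - 1 ≤ #{z ∈ (I ∪ {x, y})ᶜ | G.Adj u z ∧ G.Adj w z} := by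
    have hsub : (G.neighborFinset u ∩ G.neighborFinset w) \ {x, y} ⊆
        {z ∈ (I ∪ {x, y})ᶜ | G.Adj u z ∧ G.Adj w z} := by
      intro z hz
      have hzI : G.Adj u z → z ∉ I := fun huz hzI ↦ hI hu hzI huz.ne huz
      simp only [mem_sdiff, mem_inter, mem_neighborFinset] at hz
      grind [mem_compl]
    have := degree_add_degree_add_card_le hI hu hw
    have := card_le_card hsub
    have := le_card_sdiff {x, y} (G.neighborFinset u ∩ G.neighborFinset w)
    have := card_le_two (a := x) (b := y)
    have := hdeg u hu
    have := hdeg w hw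
    omega
  obtain ⟨a, ha⟩ : I.Nonempty := card_pos.1 (by omega)
  have hdisj : Disjoint I (I ∪ {x, y})ᶜ := disjoint_compl_right.mono_left subset_union_left
  obtain ⟨b, hb, p, hp, hlen, hsupp⟩ := exists_isPath_alternating (k := m - 1) hdisj (by omega)
    (fun u hu w hw _ ↦ hcommon u hu w hw) ha
  have hx : x ∉ p.support := fun hx ↦ by grind [mem_compl]
  have hy : y ∉ p.support := fun hy ↦ by grind [mem_compl]
  rw [show 2 * m + 1 = p.length + 3 by omega]
  exact cycleGraph_isContained_of_isPath hxy (hIadj a ha).1 (hIadj b hb).2 hp hx hy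

end OddCycle

section OddCycleFree

open Finset

variable {V : Type*} {G : SimpleGraph V}

lemma cliqueFree_card_of_free {W : Type*} [Fintype W] {H : SimpleGraph W} (hG : H.Free G) :
    G.CliqueFree (Fintype.card W) :=
  cliqueFree_iff_top_free.2 fun htop ↦ hG ((IsContained.of_le le_top).trans htop)

lemma cliqueFree_of_free_cycleGraph {k : ℕ} (hG : (cycleGraph k).Free G) : G.CliqueFree k := by
  simpa using cliqueFree_card_of_free hG

variable [Fintype V] [DecidableRel G.Adj] {m c : ℕ}

lemma card_inter_neighborFinset_add_le [DecidableEq V] {X : Finset V} {x y : V}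
    (hm : 1 ≤ m) (hG : (cycleGraph (2 * m + 1)).Free G) (hxy : G.Adj x y) (hX : G.IsIndepSet X)
    (hdeg : ∀ w ∈ X, Fintype.card V ≤ 2 * (G.degree w + c)) :
    #(X ∩ G.neighborFinset x) + #(X ∩ G.neighborFinset y) ≤ #X + 2 * c + m := by
  have hinter : #(X ∩ G.neighborFinset x ∩ (X ∩ G.neighborFinset y)) < 2 * c + m + 1 := by
    by_contra! hcard
    refine hG (cycleGraph_isContained_of_isIndepSet hm hxy (hX.mono ?_) ?_ ?_ hcard)
    · grind
    · grind
    · exact fun w hw ↦ hdeg w (by grind)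
  have hunion : #(X ∩ G.neighborFinset x ∪ X ∩ G.neighborFinset y) ≤ #X :=
    card_le_card (union_subset inter_subset_left inter_subset_left)
  have := card_union_add_card_inter (X ∩ G.neighborFinset x) (X ∩ G.neighborFinset y)
  omega

lemma card_neighborFinset_inter_neighborFinset_lt [DecidableEq V] {x y : V} (hm : 1 ≤ m)
    (hG : (cycleGraph (2 * m + 1)).Free G)
    (hdeg : ∀ v, Fintype.card V ≤ 2 * (G.degree v + c)) (hxy : G.Adj x y) :
    #(G.neighborFinset x ∩ G.neighborFinset y) <
      (2 * m + 1 + (2 * c + m + 1)).choose (2 * m + 1) := by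
  by_contra! hcard
  obtain ⟨K, -, hK⟩ | ⟨I, hIxy, hI⟩ := exists_isNClique_or_isNIndepSet _ _ hcard
  · exact cliqueFree_of_free_cycleGraph hG K hK
  · exact hG (cycleGraph_isContained_of_isIndepSet hm hxy hI.isIndepSet hIxy
      (fun w _ ↦ hdeg w) hI.card_eq.ge)

lemma degree_add_degree_add_degree_le [DecidableEq V] (x y z : V) :
    G.degree x + G.degree y + G.degree z ≤ Fintype.card V +
      #(G.neighborFinset x ∩ G.neighborFinset y) + #(G.neighborFinset x ∩ G.neighborFinset z) +
      #(G.neighborFinset y ∩ G.neighborFinset z) := by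
  simp only [← card_neighborFinset_eq_degree]
  have hxy := card_union_add_card_inter (G.neighborFinset x) (G.neighborFinset y)
  have hxyz := card_union_add_card_inter (G.neighborFinset x ∪ G.neighborFinset y)
    (G.neighborFinset z)
  rw [union_inter_distrib_right] at hxyz
  have := card_union_le (G.neighborFinset x ∩ G.neighborFinset z)
    (G.neighborFinset y ∩ G.neighborFinset z)
  have := card_le_univ (G.neighborFinset x ∪ G.neighborFinset y ∪ G.neighborFinset z)
  omega

lemma colorable_two_of_free_cycleGraph (hm : 1 ≤ m) (hG : (cycleGraph (2 * m + 1)).Free G)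
    (hdeg : ∀ v, Fintype.card V ≤ 2 * (G.degree v + c))
    (hcard : 10 * c + 6 * (2 * m + 1 + (2 * c + m + 1)).choose (2 * m + 1) < Fintype.card V) :
    G.Colorable 2 := by
  classical
  have htriangle : G.CliqueFree 3 := by
    intro K hK
    obtain ⟨x, y, z, hxy, hxz, hyz, -⟩ := is3Clique_iff.1 hK
    have := degree_add_degree_add_degree_le (G := G) x y z
    have := card_neighborFinset_inter_neighborFinset_lt hm hG hdeg hxy
    have := card_neighborFinset_inter_neighborFinset_lt hm hG hdeg hxz
    have := card_neighborFinset_inter_neighborFinset_lt hm hG hdeg hyz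
    have := hdeg x
    have := hdeg y
    have := hdeg z
    omega
  have : Nonempty V := Fintype.card_pos_iff.1 (by omega)
  obtain ⟨v, hv⟩ := G.exists_minimal_degree_vertex
  refine colorable_of_cliqueFree_lt_minDegree htriangle ?_
  have := hdeg v
  omega

end OddCycleFree

section UpperBound

open Finset

variable {V : Type*} {G : SimpleGraph V} {m n t c : ℕ}

lemma exists_isNClique_compl_of_colorable_two [Fintype V] [DecidableEq V] (hG : G.Colorable 2)
    (hfan : (genFan n t).Free Gᶜ) (hcard : Fintype.card V = 2 * (n * t)) :
    ∃ P : Finset V, Gᶜ.IsNClique (n * t) P ∧ Gᶜ.IsNClique (n * t) Pᶜ := by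
  obtain ⟨C⟩ := hG
  have hclass (P : Finset V) (i : Fin 2) (hP : ∀ v ∈ P, C v = i) : Gᶜ.IsClique P := by
    refine (isClique_compl ..).2 fun u hu v hv _ huv ↦ C.valid huv ?_
    rw [hP u hu, hP v hv]
  have hsmall (P : Finset V) (hP : Gᶜ.IsClique P) : #P ≤ n * t := by
    have hfree := cliqueFree_card_of_free hfan
    rw [card_genFan_vertices] at hfree
    by_contra! hlt
    exact (hfree.mono hlt) P ⟨hP, rfl⟩
  have hP := hclass {v | C v = 0} 0 (by simp)
  have hPc := hclass ({v | C v = 0} : Finset V)ᶜ 1 fun v hv ↦ by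
    have : C v ≠ 0 := by simpa using hv
    omega
  have := hsmall _ hP
  have := hsmall _ hPc
  have := card_add_card_compl ({v | C v = 0} : Finset V)
  exact ⟨_, ⟨hP, by omega⟩, ⟨hPc, by omega⟩⟩

lemma card_inter_neighborFinset_le_of_nonempty [Fintype V] [DecidableEq V] [DecidableRel G.Adj]
    {X Y : Finset V} {z : V} (hm : 1 ≤ m) (hG : (cycleGraph (2 * m + 1)).Free G)
    (hX : G.IsIndepSet X) (hY : G.IsIndepSet Y) (hcard : Fintype.card V = 2 * #X + 1)
    (hzX : z ∉ X) (hXY : ∀ v ≠ z, v ∈ X ∨ v ∈ Y)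
    (hdeg : ∀ v ≠ z, Fintype.card V ≤ 2 * (G.degree v + c))
    (hYz : (Y ∩ G.neighborFinset z).Nonempty) : #(X ∩ G.neighborFinset z) ≤ 3 * c + m := by
  obtain ⟨q, hq⟩ := hYz
  obtain ⟨hqY, hqz⟩ := mem_inter.1 hq
  have hzq : G.Adj z q := (mem_neighborFinset ..).1 hqz
  have hsum := card_inter_neighborFinset_add_le hm hG hzq hX fun w hw ↦
    hdeg w (ne_of_mem_of_not_mem hw hzX)
  have hNq : G.neighborFinset q ⊆ insert z (X ∩ G.neighborFinset q) := fun v hv ↦ by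
    have hqv := (mem_neighborFinset ..).1 hv
    have := hY hqY (y := v)
    grind [hqv.ne]
  have hdegq := (card_le_card hNq).trans (card_insert_le _ _)
  rw [card_neighborFinset_eq_degree] at hdegq
  have := hdeg q hzq.ne'
  omega

lemma degree_le_card_inter_add_card_inter [Fintype V] [DecidableEq V] [DecidableRel G.Adj]
    {P Q : Finset V} {z : V} (hPQ : ∀ v ≠ z, v ∈ P ∨ v ∈ Q) :
    G.degree z ≤ #(P ∩ G.neighborFinset z) + #(Q ∩ G.neighborFinset z) := by
  rw [← card_neighborFinset_eq_degree]
  refine (card_le_card fun v hv ↦ ?_).trans (card_union_le _ _)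
  have := hPQ v ((mem_neighborFinset ..).1 hv).ne'
  grind

lemma degree_add_degree_lt_of_free [Fintype V] {R B : SimpleGraph V} [DecidableRel R.Adj]
    [DecidableRel B.Adj] (hm : 1 ≤ m) (hn : 0 < n) (ht : 0 < t) (hRB : Disjoint R B)
    (hR : (cycleGraph (2 * m + 1)).Free R) (hB : (genFan n t).Free B)
    (hcard : Fintype.card V = 2 * (n * t) + 1) {P Q : Finset V} (hP : B.IsNClique (n * t) P)
    (hQ : B.IsNClique (n * t) Q) {z : V} (hzP : z ∉ P) (hzQ : z ∉ Q)
    (hPQ : ∀ v ≠ z, v ∈ P ∨ v ∈ Q) (hdeg : ∀ v ≠ z, Fintype.card V ≤ 2 * (R.degree v + c))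
    (hlarge : 6 * c + 2 * m + t ≤ n * t) :
    R.degree z + B.degree z < n * t + t := by
  classical
  have hindep {X : Finset V} (hX : B.IsNClique (n * t) X) : R.IsIndepSet X :=
    fun u hu v hv huv hadj ↦ SimpleGraph.disjoint_left.1 hRB u v hadj (hX.isClique hu hv huv)
  have hclass {X : Finset V} (hX : B.IsNClique (n * t) X) :
      #(X ∩ R.neighborFinset z) + #(X ∩ B.neighborFinset z) ≤ n * t := by
    rw [← card_union_of_disjoint, ← hX.card_eq]
    · exact card_le_card (union_subset inter_subset_left inter_subset_left)
    · exact (disjoint_neighborFinset_of_disjoint R B z hRB).mono inter_subset_right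
        inter_subset_right
  have := hclass hP
  have := hclass hQ
  have hredz := degree_le_card_inter_add_card_inter (G := R) hPQ
  have hbluez := degree_le_card_inter_add_card_inter (G := B) hPQ
  have hblueP := card_inter_neighborFinset_lt_of_free_genFan hB hn ht hP hzP
  have hblueQ := card_inter_neighborFinset_lt_of_free_genFan hB hn ht hQ hzQ
  rcases (P ∩ R.neighborFinset z).eq_empty_or_nonempty with hPz | hPz
  · rw [hPz, card_empty] at hredz
    omega
  rcases (Q ∩ R.neighborFinset z).eq_empty_or_nonempty with hQz | hQz
  · rw [hQz, card_empty] at hredz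
    omega
  have hredP := card_inter_neighborFinset_le_of_nonempty hm hR (hindep hP) (hindep hQ)
    (by rw [hcard, hP.card_eq]) hzP hPQ hdeg hQz
  have hredQ := card_inter_neighborFinset_le_of_nonempty hm hR (hindep hQ) (hindep hP)
    (by rw [hcard, hQ.card_eq]) hzQ (fun v hv ↦ (hPQ v hv).symm) hdeg hPz
  omega

lemma degree_KstarK_none {N l : ℕ} [DecidableRel (KstarK N l).Adj] (hl : l ≤ N) :
    (KstarK N l).degree none = l := by
  have hnbr : (KstarK N l).neighborFinset none =
      ({i : Fin N | (i : ℕ) < l} : Finset (Fin N)).map .some := by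
    ext (_ | i) <;> simp
  rw [← card_neighborFinset_eq_degree, hnbr, card_map, Fin.card_filter_val_lt, min_eq_right hl]

lemma degree_add_degree_sdiff [Fintype V] {K R : SimpleGraph V} (hRK : R ≤ K)
    [DecidableRel K.Adj] [DecidableRel R.Adj] [DecidableRel (K \ R).Adj] (v : V) :
    R.degree v + (K \ R).degree v = K.degree v := by
  classical
  simp only [← card_neighborFinset_eq_degree]
  rw [neighborFinset_sdiff, add_comm]
  refine card_sdiff_add_card_eq_card fun w hw ↦ ?_
  rw [mem_neighborFinset] at hw ⊢
  exact hRK hw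

lemma isNClique_map_some {N k : ℕ} {B : SimpleGraph (Option (Fin N))} {P : Finset (Fin N)}
    (hP : (B.comap some).IsNClique k P) : B.IsNClique k (P.map .some) :=
  (hP.map (f := .some)).mono (map_comap_le _ _)

theorem exists_starArrows_cycleGraph_genFan (hm : 1 ≤ m) (ht : 1 ≤ t) :
    ∃ n₀, ∀ n ≥ n₀, starArrows (2 * (n * t)) (n * t + t) (cycleGraph (2 * m + 1)) (genFan n t) := by
  classical
  set c := (2 * m + 1 + t).choose (2 * m + 1)
  set d := (2 * m + 1 + (2 * c + m + 1)).choose (2 * m + 1)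
  refine ⟨10 * (c + 1) + 6 * d + 2 * m + t + 1, fun n hn R hRK ↦ ?_⟩
  have hnt : n ≤ n * t := Nat.le_mul_of_pos_right n ht
  rw [containsCopy_iff_isContained, containsCopy_iff_isContained]
  by_contra hfree
  obtain ⟨hR, hB⟩ := not_or.1 hfree
  have hcomap (F : SimpleGraph (Option (Fin (2 * (n * t))))) : F.comap some ⊑ F :=
    (Embedding.comap .some F).isContained
  have hred : (cycleGraph (2 * m + 1)).Free (R.comap some) := fun h ↦ hR (h.trans (hcomap R))
  have hblue : (genFan n t).Free (R.comap some)ᶜ := by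
    rw [← comap_some_KstarK_sdiff]
    exact fun h ↦ hB (h.trans (hcomap _))
  have hdeg := card_le_degree_add_of_free_genFan_compl (cliqueFree_of_free_cycleGraph hred) hblue
  have hcol : (R.comap some).Colorable 2 := by
    refine colorable_two_of_free_cycleGraph (c := c) hm hred (fun v ↦ ?_) ?_
    · have := hdeg v
      rw [Fintype.card_fin] at *
      omega
    · rw [Fintype.card_fin]
      omega
  obtain ⟨P, hP, hPc⟩ := exists_isNClique_compl_of_colorable_two hcol hblue (Fintype.card_fin _)
  rw [← comap_some_KstarK_sdiff] at hP hPc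
  have hlt := degree_add_degree_lt_of_free (c := c + 1) (z := none) hm (by omega) ht
    disjoint_sdiff_self_right hR hB (by simp) (isNClique_map_some hP) (isNClique_map_some hPc)
    (by simp) (by simp) (by simp [Option.forall, em]) (fun v hv ↦ ?_) (by omega)
  · rw [degree_add_degree_sdiff hRK, degree_KstarK_none (by omega)] at hlt
    exact hlt.false
  · obtain ⟨i, rfl⟩ := Option.ne_none_iff_exists'.1 hv
    have hle : (R.comap some).degree i ≤ R.degree (some i) :=
      (Embedding.comap .some R).toCopy.degree_le i
    have := hdeg i
    simp only [Fintype.card_option, Fintype.card_fin] at this ⊢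
    omega

end UpperBound

theorem statement_17_general (m t : ℕ) (hm : 1 ≤ m) (ht : 1 ≤ t) :
    ∃ n₀ : ℕ, ∀ n : ℕ, n₀ ≤ n →
      starRamsey (SimpleGraph.cycleGraph (2 * m + 1)) (genFan n t) = n * t + t := by
  classical
  obtain ⟨n₀, hn₀⟩ := exists_starArrows_cycleGraph_genFan hm ht
  refine ⟨n₀ + 1, fun n hn ↦ ?_⟩
  have hnpos : 0 < n := by omega
  refine starRamsey_eq (by omega) (hn₀ n (by omega)) fun l hl ↦ ?_
  exact not_starArrows_of_lt_add_degree (not_colorable_two_cycleGraph_odd hm)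
    genFan_preconnected card_genFan_vertices ht (le_degree_genFan hnpos) hl

theorem statement_17 (m t : ℕ) (hm : 1 ≤ m) (ht : 2 ≤ t) :
    ∃ n₀ : ℕ, ∀ n : ℕ, n₀ ≤ n →
      starRamsey (SimpleGraph.cycleGraph (2 * m + 1)) (genFan n t) = n * t + t :=
  statement_17_general m t hm (by omega)
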